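/- For every integer n ≥ 3, the permutation polytope P(A_n) of the alternating group A_n is two-level if and only if n ≤ 4. -/

import Mathlib

/-!
Write `M(g)` for the permutation matrix of `g` and `P` for the polytope of `A_n`.

For `n ≥ 5` the matrix of a transposition lies in the affine span of `P` but not in `P`, since
permutation matrices are extreme among doubly stochastic matrices. A point of the affine span
outside `P` violates some facet inequality (`exists_maximal_violated`, `isFacet_of_maximal`): among
the valid inequalities violated at that point, one with a maximal set of tight vertices defines a
facet. If `P` were two-level, the normalized slack of this facet would be an affine functional with
values in `{0, 1}` on `A_n` and negative at the transposition (`IsTwoLevel.exists_zero_one`).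
No such functional exists (`nonneg_of_zero_one`). Let `t_ij` be its value at `M((i j))` and let `e`
be its value at the identity. The relation `M((i j)) + M((k l)) = M(1) + M((i j)(k l))` for disjoint
transpositions gives that `t_ij + t_kl` is `e` or `e + 1`, and going around a 5-cycle of disjoint
pairs gives that `2 * t_ij` is an integer. Equality of the sums of the even and of the odd matrices
of a symmetric group on three letters gives that `t_ij + t_jk + t_ik` is an integer between `e` and
`e + 2`, and then that `3 * t_ij` is an integer. Hence the `t_ij` are integers. If `t_01 ≤ -1`, then
each of `t_23, t_24, t_34` is at least `e + 1`, so their sum is at least `3 * e + 3 > e + 2`,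
a contradiction.

For `n = 3` the polytope is a triangle. For `n = 4` it has 12 vertices and dimension 9, so a facet
misses at most three vertices. The four matrices in each of the three cosets of the Klein
four-group add up to the all-one matrix, so the total slack over a coset is the same positive number
for all cosets. Hence each coset contains exactly one missed vertex, and the slack is the same at
these three vertices.
-/

/-- The permutation matrix of a permutation `g` of `Fin n`. -/
noncomputable def permMatrix (n : ℕ) (g : Equiv.Perm (Fin n)) :
    Matrix (Fin n) (Fin n) ℝ :=
  Matrix.of fun i j => if g i = j then (1 : ℝ) else 0

/-- The permutation polytope of a set of permutations. -/
noncomputable def permPolytope (n : ℕ) (G : Set (Equiv.Perm (Fin n))) :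
    Set (Matrix (Fin n) (Fin n) ℝ) :=
  convexHull ℝ (permMatrix n '' G)

/-- The dimension of a polytope: the dimension of its affine span. -/
noncomputable def polytopeDim {E : Type*} [AddCommGroup E] [Module ℝ E] (P : Set E) : ℕ :=
  Module.finrank ℝ (affineSpan ℝ P).direction

/-- `F` is a facet of `P`: `F` is the set of maximizers in `P` of some linear functional
that is non-constant on `P`, and the affine span of `F` has dimension `dim P − 1`. -/
def IsFacet {E : Type*} [AddCommGroup E] [Module ℝ E] (P F : Set E) : Prop :=
  (∃ c : E →ₗ[ℝ] ℝ, (∃ x ∈ P, ∃ y ∈ P, c x ≠ c y)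
      ∧ F = {x ∈ P | ∀ y ∈ P, c y ≤ c x})
  ∧ polytopeDim F + 1 = polytopeDim P

/-- `P` is two-level: for every facet `F` of `P` there are a linear functional `c` and
reals `α, β` with `F = {x ∈ P : c x = α}` and every vertex (extreme point) `v` of `P`
satisfies `c v = α` or `c v = β`. -/
def IsTwoLevel {E : Type*} [AddCommGroup E] [Module ℝ E] (P : Set E) : Prop :=
  ∀ F : Set E, IsFacet P F →
    ∃ (c : E →ₗ[ℝ] ℝ) (α β : ℝ),
      F = {x ∈ P | c x = α}
      ∧ ∀ v ∈ Set.extremePoints ℝ P, c v = α ∨ c v = β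

/-! ### Facets of polytopes and two-level polytopes -/

section Polytope

variable {E : Type*} [AddCommGroup E] [Module ℝ E]

lemma polytopeDim_convexHull (V : Set E) :
    polytopeDim (convexHull ℝ V) = Module.finrank ℝ (vectorSpan ℝ V) := by
  rw [polytopeDim, affineSpan_convexHull, direction_affineSpan]

/-- A linear functional that is constant on `V` takes the same value on the affine span. -/
lemma eq_of_mem_affineSpan {V : Set E} {x : E} (hx : x ∈ affineSpan ℝ V)
    (b : E →ₗ[ℝ] ℝ) (β : ℝ) (h : ∀ v ∈ V, b v = β) : b x = β := by
  refine affineSpan_induction (p := fun x => b x = β) hx h fun c u v w hu hv hw => ?_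
  simp [hu, hv, hw]

lemma le_on_convexHull {V : Set E} {c : E →ₗ[ℝ] ℝ} {m : ℝ} (h : ∀ v ∈ V, c v ≤ m)
    {y : E} (hy : y ∈ convexHull ℝ V) : c y ≤ m :=
  convexHull_min (t := {y | c y ≤ m}) h (convex_halfSpace_le c.isLinear m) hy

/-- Among the inequalities `c ≤ m` valid on a finite set `V` and violated at `x`, there is one whose
tight points determine it on `V` up to scaling: any affine functional vanishing at the tight points
is, on `V`, a multiple of `c - m`. -/
lemma exists_maximal_violated {V : Set E} (hV : V.Finite) {x : E} (c₀ : E →ₗ[ℝ] ℝ) (m₀ : ℝ)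
    (h₀ : ∀ v ∈ V, c₀ v ≤ m₀) (hx₀ : m₀ < c₀ x) :
    ∃ (c : E →ₗ[ℝ] ℝ) (m : ℝ), (∀ v ∈ V, c v ≤ m) ∧ m < c x ∧
      ∀ (b : E →ₗ[ℝ] ℝ) (β : ℝ), (∀ v ∈ V, c v = m → b v = β) →
        ∃ l : ℝ, ∀ v ∈ V, b v - β = l * (c v - m) := by
  induction hk : {v ∈ V | c₀ v ≠ m₀}.ncard using Nat.strong_induction_on
    generalizing c₀ m₀ with
  | _ k ih =>
    by_cases hmax : ∀ (b : E →ₗ[ℝ] ℝ) (β : ℝ), (∀ v ∈ V, c₀ v = m₀ → b v = β) →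
        ∃ l : ℝ, ∀ v ∈ V, b v - β = l * (c₀ v - m₀)
    · exact ⟨c₀, m₀, h₀, hx₀, hmax⟩
    push Not at hmax
    obtain ⟨b, β, hb, hl⟩ := hmax
    have hpos : 0 < c₀ x - m₀ := by linarith
    -- Subtracting a multiple of `c₀ - m₀` makes the functional vanish at `x`; the sign is
    -- chosen so that it is positive at some point of `V`.
    obtain ⟨d, δ, hd, hdx, u, hu, hdu⟩ : ∃ (d : E →ₗ[ℝ] ℝ) (δ : ℝ),
        (∀ v ∈ V, c₀ v = m₀ → d v = δ) ∧ d x = δ ∧ ∃ u ∈ V, δ < d u := by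
      set r := (b x - β) / (c₀ x - m₀) with hr
      obtain ⟨u, hu, hne⟩ := hl r
      have hrx : r * (c₀ x - m₀) = b x - β := by rw [hr]; field_simp
      rcases lt_or_gt_of_ne hne with h | h
      · refine ⟨r • c₀ - b, r * m₀ - β, fun v hv h1 => ?_, ?_, u, hu, ?_⟩
        · simp [hb v hv h1, h1]
        · simp; linarith
        · simp; linarith
      · refine ⟨b - r • c₀, β - r * m₀, fun v hv h1 => ?_, ?_, u, hu, ?_⟩
        · simp [hb v hv h1, h1]
        · simp; linarith
        · simp; linarith
    -- Rotate towards `d - δ` until the first new point of `V` becomes tight.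
    obtain ⟨w, ⟨hw, hdw⟩, hwmin⟩ := Set.exists_min_image {v ∈ V | δ < d v}
      (fun v => (m₀ - c₀ v) / (d v - δ)) (hV.subset (Set.sep_subset _ _)) ⟨u, hu, hdu⟩
    set s := (m₀ - c₀ w) / (d w - δ) with hs
    have hdw' : 0 < d w - δ := by linarith
    have hs0 : 0 ≤ s := div_nonneg (by linarith [h₀ w hw]) hdw'.le
    have hsw : s * (d w - δ) = m₀ - c₀ w := by rw [hs]; field_simp
    refine ih ({v ∈ V | (c₀ + s • d) v ≠ m₀ + s * δ}.ncard) ?_ (c₀ + s • d) (m₀ + s * δ)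
      ?_ ?_ rfl
    · rw [← hk]
      refine Set.ncard_lt_ncard ⟨?_, fun hsub => ?_⟩ (hV.subset (Set.sep_subset _ _))
      · rintro v ⟨hv, hne⟩
        refine ⟨hv, fun h1 => hne ?_⟩
        simp [hd v hv h1, h1]
      · have : w ∈ {v ∈ V | c₀ v ≠ m₀} := ⟨hw, fun h1 => by linarith [hd w hw h1]⟩
        refine (hsub this).2 ?_
        simp; linarith
    · intro v hv
      simp only [LinearMap.add_apply, LinearMap.smul_apply, smul_eq_mul]
      rcases lt_or_ge δ (d v) with h1 | h1
      · have h2 := hwmin v ⟨hv, h1⟩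
        rw [le_div_iff₀ (by linarith)] at h2
        linarith
      · nlinarith [h₀ v hv]
    · simp [hdx]; linarith

/-- A valid inequality that is violated somewhere on the affine span of `V` and is determined on `V`
up to scaling by its tight points defines a facet of the convex hull of `V`. -/
lemma isFacet_of_maximal [FiniteDimensional ℝ E] {V : Set E} {x : E}
    (hx : x ∈ affineSpan ℝ V) {c : E →ₗ[ℝ] ℝ} {m : ℝ}
    (hc : ∀ v ∈ V, c v ≤ m) (hcx : m < c x)
    (hmax : ∀ (b : E →ₗ[ℝ] ℝ) (β : ℝ), (∀ v ∈ V, c v = m → b v = β) →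
        ∃ l : ℝ, ∀ v ∈ V, b v - β = l * (c v - m)) :
    IsFacet (convexHull ℝ V) {y ∈ convexHull ℝ V | c y = m} := by
  -- If nothing were tight, the constant `1` would be a multiple of `c - m`.
  have hne : ∃ t ∈ V, c t = m := by
    by_contra! h
    obtain ⟨l, hl⟩ := hmax 0 (-1) (fun v hv h1 => absurd h1 (h v hv))
    have hx1 := eq_of_mem_affineSpan hx (l • c) (1 + l * m) (fun v hv => by
      have := hl v hv
      simp at this ⊢; linarith)
    simp at hx1
    obtain ⟨v, hv⟩ : V.Nonempty := by
      rw [← affineSpan_nonempty ℝ]; exact ⟨x, hx⟩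
    have h1 := hl v hv
    have h2 := hc v hv
    simp at h1
    have h3 : 0 < l := by
      by_contra! h3
      nlinarith
    nlinarith
  have hlt : ∃ v ∈ V, c v ≠ m := by
    by_contra! h
    linarith [eq_of_mem_affineSpan hx c m h]
  obtain ⟨t, ht, htm⟩ := hne
  obtain ⟨u, hu, hum⟩ := hlt
  have hsub := subset_convexHull ℝ V
  refine ⟨⟨c, ⟨t, hsub ht, u, hsub hu, by rw [htm]; exact hum.symm⟩, ?_⟩, ?_⟩
  · ext y
    refine and_congr_right fun hy => ⟨fun h z hz => h ▸ le_on_convexHull hc hz, fun h => ?_⟩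
    exact le_antisymm (le_on_convexHull hc hy) (htm ▸ h t (hsub ht))
  · rw [polytopeDim_convexHull, polytopeDim, direction_affineSpan]
    set D := vectorSpan ℝ V with hD
    -- The direction of the face is the kernel of `c` on the direction of the polytope.
    have key : vectorSpan ℝ {y ∈ convexHull ℝ V | c y = m} = D ⊓ LinearMap.ker c := by
      apply le_antisymm
      · rw [vectorSpan_def, Submodule.span_le]
        rintro _ ⟨y, ⟨hy, hym⟩, z, ⟨hz, hzm⟩, rfl⟩
        refine ⟨?_, by simp [hym, hzm]⟩
        rw [hD, ← direction_affineSpan]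
        exact AffineSubspace.vsub_mem_direction (convexHull_subset_affineSpan V hy)
          (convexHull_subset_affineSpan V hz)
      · rintro z ⟨hzD, hzc⟩
        by_contra hz
        obtain ⟨f, hfz, hf⟩ := Submodule.exists_le_ker_of_notMem hz
        obtain ⟨l, hl⟩ := hmax f (f t) (fun v hv hvm => by
          have := hf (vsub_mem_vectorSpan ℝ (s := {y ∈ convexHull ℝ V | c y = m})
            ⟨hsub hv, hvm⟩ ⟨hsub ht, htm⟩)
          simp at this; linarith)
        have hle : D ≤ LinearMap.ker (f - l • c) := by
          rw [hD, vectorSpan_def, Submodule.span_le]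
          rintro _ ⟨y, hy, z, hz, rfl⟩
          have h1 := hl y hy
          have h2 := hl z hz
          simp; linarith
        have := hle hzD
        have hzc' : c z = 0 := hzc
        simp [hzc'] at this
        exact hfz this
    rw [key]
    have hrange : LinearMap.range (c.domRestrict D) = ⊤ := by
      have hsurj : LinearMap.range (c.domRestrict D) ≠ ⊥ := by
        intro h
        rw [LinearMap.range_eq_bot] at h
        have := LinearMap.congr_fun h ⟨u - t, vsub_mem_vectorSpan ℝ hu ht⟩
        simp [htm] at this
        exact hum (by linarith)
      exact (eq_bot_or_eq_top _).resolve_left hsurj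
    have h1 := LinearMap.finrank_range_add_finrank_ker (c.domRestrict D)
    rw [hrange, finrank_top, Module.finrank_self] at h1
    have h2 : Module.finrank ℝ (LinearMap.ker (c.domRestrict D))
        = Module.finrank ℝ (D ⊓ LinearMap.ker c : Submodule ℝ E) := by
      have h3 : (LinearMap.ker (c.domRestrict D)).map D.subtype = D ⊓ LinearMap.ker c := by
        rw [LinearMap.ker_domRestrict]
        exact Submodule.map_comap_subtype _ _
      rw [← h3]
      exact (Submodule.finrank_map_subtype_eq _ _).symm
    omega

/-- A point of the affine span of a two-level polytope outside the polytope is cut off by an affine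
functional taking only the values `0` and `1` on the vertices: the normalized slack of a facet
inequality violated at that point. -/
lemma IsTwoLevel.exists_zero_one [TopologicalSpace E] [IsTopologicalAddGroup E]
    [ContinuousSMul ℝ E] [LocallyConvexSpace ℝ E] [T2Space E] [FiniteDimensional ℝ E]
    {V : Set E} (hV : V.Finite) (hext : V ⊆ (convexHull ℝ V).extremePoints ℝ)
    (h2 : IsTwoLevel (convexHull ℝ V)) {x : E} (hx : x ∈ affineSpan ℝ V)
    (hxP : x ∉ convexHull ℝ V) :
    ∃ (f : E →ₗ[ℝ] ℝ) (γ : ℝ), (∀ v ∈ V, f v + γ = 0 ∨ f v + γ = 1) ∧ f x + γ < 0 := by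
  have hsub := subset_convexHull ℝ V
  obtain ⟨c₀, m₀, h₀, hx₀⟩ := geometric_hahn_banach_closed_point (convex_convexHull ℝ V)
    (hV.isClosed_convexHull ℝ) hxP
  obtain ⟨c, m, hc, hcx, hmax⟩ := exists_maximal_violated hV (x := x) c₀.toLinearMap m₀
    (fun v hv => (h₀ v (hsub hv)).le) hx₀
  obtain ⟨b, α, β, hF, hb⟩ := h2 _ (isFacet_of_maximal hx hc hcx hmax)
  have hface : ∀ v ∈ V, c v = m ↔ b v = α := fun v hv => by
    have := Set.ext_iff.1 hF v
    simpa [hsub hv] using this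
  obtain ⟨l, hl⟩ := hmax b α (fun v hv => (hface v hv).1)
  obtain ⟨u, hu, hum⟩ : ∃ v ∈ V, c v ≠ m := by
    by_contra! h
    linarith [eq_of_mem_affineSpan hx c m h]
  have hbu : b u = β := (hb u (hext hu)).resolve_left fun h => hum ((hface u hu).2 h)
  have hαβ : β - α ≠ 0 := fun h => hum ((hface u hu).2 (by linarith))
  have hcu : c u - m < 0 := by linarith [lt_of_le_of_ne (hc u hu) hum]
  have hlx : b x - α = l * (c x - m) := by
    have := eq_of_mem_affineSpan hx (b - l • c) (α - l * m) (fun v hv => by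
      have := hl v hv
      simp; linarith)
    simp at this; linarith
  have hlu := hl u hu
  rw [hbu] at hlu
  refine ⟨(β - α)⁻¹ • b, -((β - α)⁻¹ * α), fun v hv => ?_, ?_⟩
  · rcases hb v (hext hv) with h | h
    · left; simp [h]
    · right; simp [h]; rw [← sub_eq_add_neg, ← mul_sub, inv_mul_cancel₀ hαβ]
  · have hl0 : l ≠ 0 := by rintro rfl; simp at hlu; exact hαβ hlu
    have : (β - α)⁻¹ * (b x - α) < 0 := by
      rw [hlx, hlu, mul_inv, mul_mul_mul_comm, inv_mul_cancel₀ hl0, one_mul]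
      exact mul_neg_of_neg_of_pos (inv_lt_zero.2 hcu) (by linarith)
    simp; linarith

/-- A facet of the hull of a finite set contains, among the points of that set, at least as many as
the dimension of the hull. -/
lemma IsFacet.exists_functional {V F : Set E} (hV : V.Finite) (hne : V.Nonempty)
    (hF : IsFacet (convexHull ℝ V) F) :
    ∃ (c : E →ₗ[ℝ] ℝ) (m : ℝ), (∀ v ∈ V, c v ≤ m) ∧ (∃ v ∈ V, c v ≠ m) ∧
      F = {y ∈ convexHull ℝ V | c y = m} ∧
      polytopeDim (convexHull ℝ V) ≤ {v ∈ V | c v = m}.ncard := by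
  obtain ⟨⟨c, ⟨y, hy, z, hz, hyz⟩, hFc⟩, hdim⟩ := hF
  have hsub := subset_convexHull ℝ V
  obtain ⟨t, ht, htmax⟩ := Set.exists_max_image V c hV hne
  have hF' : F = {y ∈ convexHull ℝ V | c y = c t} := by
    rw [hFc]
    ext y
    refine and_congr_right fun hy => ⟨fun h => ?_, fun h z hz => h ▸ le_on_convexHull htmax hz⟩
    exact le_antisymm (le_on_convexHull htmax hy) (h t (hsub ht))
  refine ⟨c, c t, htmax, ?_, hF', ?_⟩
  · by_contra! h
    exact hyz ((eq_of_mem_affineSpan (convexHull_subset_affineSpan V hy) c _ h).trans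
      (eq_of_mem_affineSpan (convexHull_subset_affineSpan V hz) c _ h).symm)
  · set T := {v ∈ V | c v = c t} with hT
    have hTfin : T.Finite := hV.subset (Set.sep_subset _ _)
    have hTle : ∀ y ∈ convexHull ℝ T, c y = c t := fun y hy =>
      eq_of_mem_affineSpan (convexHull_subset_affineSpan T hy) c _ fun v hv => hv.2
    -- The hull of the tight points together with an open half-space is convex, so it contains
    -- the whole polytope.
    have hcv : Convex ℝ {y | y ∈ convexHull ℝ T ∨ c y < c t} := by
      rw [convex_iff_forall_pos]
      intro y hy z hz a b ha hb hab
      have hb' : b = 1 - a := by linarith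
      rcases hy with hy | hy
      · rcases hz with hz | hz
        · exact Or.inl (convex_convexHull ℝ T hy hz ha.le hb.le hab)
        · right; have := hTle y hy; simp [this]; subst hb'; nlinarith
      · have hz' : c z ≤ c t := hz.elim (fun h => (hTle z h).le) le_of_lt
        right; simp; subst hb'; nlinarith
    have hFT : F ⊆ convexHull ℝ T := by
      rw [hF']
      rintro y ⟨hy, hyt⟩
      refine (convexHull_min (fun v hv => ?_) hcv hy).resolve_right (by simp [hyt])
      rcases (htmax v hv).lt_or_eq with h | h
      · exact Or.inr h
      · exact Or.inl (subset_convexHull ℝ T ⟨hv, h⟩)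
    have hle : vectorSpan ℝ F ≤ vectorSpan ℝ T := by
      rw [← direction_affineSpan ℝ T, ← affineSpan_convexHull, direction_affineSpan]
      exact vectorSpan_mono ℝ hFT
    have hfin := hTfin.to_subtype
    have := Fintype.ofFinite T
    have : Nonempty T := ⟨⟨t, ht, rfl⟩⟩
    have h1 : Module.finrank ℝ (vectorSpan ℝ T) + 1 ≤ Fintype.card T := by
      have := finrank_vectorSpan_range_add_one_le ℝ (Subtype.val : T → E)
      rwa [Subtype.range_val] at this
    have : FiniteDimensional ℝ (vectorSpan ℝ T) := finiteDimensional_vectorSpan_of_finite ℝ hTfin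
    have h2 := Submodule.finrank_mono hle
    rw [← hdim, polytopeDim, direction_affineSpan, ← Nat.card_coe_set_eq, Nat.card_eq_fintype_card]
    omega

end Polytope

/-! ### Permutation matrices and the alternating polytope -/

section Permutations

open Equiv

variable {n : ℕ}

/-- The vertex set of the polytope of the alternating group. -/
noncomputable def evenMatrices (n : ℕ) : Set (Matrix (Fin n) (Fin n) ℝ) :=
  permMatrix n '' ((alternatingGroup (Fin n) : Subgroup (Perm (Fin n))) : Set (Perm (Fin n)))

lemma permMatrix_eq (g : Perm (Fin n)) : permMatrix n g = g.permMatrix ℝ := by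
  ext i j
  simp [permMatrix, PEquiv.toMatrix_apply, eq_comm]

lemma permMatrix_apply_eq_single (g : Perm (Fin n)) (i j : Fin n) :
    permMatrix n g i j = (Pi.single (g i) 1 : Fin n → ℝ) j := by
  simp [permMatrix, Pi.single_apply, eq_comm]

lemma permMatrix_injective : Function.Injective (permMatrix n) := by
  intro g h hgh
  ext i
  have := congrFun (congrFun hgh i) (g i)
  simp only [permMatrix, Matrix.of_apply, if_true] at this
  by_contra hne
  rw [if_neg (fun h' => hne (by rw [h']))] at this
  exact one_ne_zero this

lemma permMatrix_mem_extremePoints (g : Perm (Fin n)) :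
    permMatrix n g ∈ Set.extremePoints ℝ (doublyStochastic ℝ (Fin n) : Set (Matrix _ _ ℝ)) := by
  rw [extremePoints_doublyStochastic]
  exact ⟨g, (permMatrix_eq g).symm⟩

lemma convexHull_evenMatrices_subset :
    convexHull ℝ (evenMatrices n) ⊆ doublyStochastic ℝ (Fin n) := by
  refine convexHull_min ?_ convex_doublyStochastic
  rintro _ ⟨g, -, rfl⟩
  exact (permMatrix_mem_extremePoints g).1

lemma permMatrix_mem_extremePoints_of_mem {g : Perm (Fin n)}
    (h : permMatrix n g ∈ convexHull ℝ (evenMatrices n)) :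
    permMatrix n g ∈ Set.extremePoints ℝ (convexHull ℝ (evenMatrices n)) :=
  inter_extremePoints_subset_extremePoints_of_subset convexHull_evenMatrices_subset
    ⟨h, permMatrix_mem_extremePoints g⟩

lemma finite_evenMatrices : (evenMatrices n).Finite := (Set.toFinite _).image _

lemma evenMatrices_subset_extremePoints :
    evenMatrices n ⊆ Set.extremePoints ℝ (convexHull ℝ (evenMatrices n)) := by
  rintro _ ⟨g, hg, rfl⟩
  exact permMatrix_mem_extremePoints_of_mem (subset_convexHull ℝ _ ⟨g, hg, rfl⟩)

lemma permMatrix_notMem_convexHull {g : Perm (Fin n)} (hg : g ∉ alternatingGroup (Fin n)) :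
    permMatrix n g ∉ convexHull ℝ (evenMatrices n) := by
  intro h
  obtain ⟨g', hg', hgg⟩ := extremePoints_convexHull_subset (permMatrix_mem_extremePoints_of_mem h)
  exact hg (permMatrix_injective hgg ▸ hg')

lemma ncard_evenMatrices (hn : 2 ≤ n) : (evenMatrices n).ncard = n.factorial / 2 := by
  have : Nontrivial (Fin n) := Fin.nontrivial_iff_two_le.2 hn
  rw [evenMatrices, Set.ncard_image_of_injective _ permMatrix_injective]
  have := nat_card_alternatingGroup (α := Fin n)
  rw [Nat.card_fin] at this
  rw [← this]
  rfl

lemma permMatrix_mem_evenMatrices {g : Perm (Fin n)} (hg : Perm.sign g = 1) :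
    permMatrix n g ∈ evenMatrices n := ⟨g, hg, rfl⟩

lemma one_mem_evenMatrices : permMatrix n 1 ∈ evenMatrices n :=
  permMatrix_mem_evenMatrices (by simp)

/-- The relation `M((i j)) + M((k l)) = M(1) + M((i j)(k l))` for disjoint transpositions. -/
lemma permMatrix_swap_add_swap {i j k l : Fin n} (hik : i ≠ k) (hil : i ≠ l)
    (hjk : j ≠ k) (hjl : j ≠ l) :
    permMatrix n (swap i j) + permMatrix n (swap k l)
      = permMatrix n 1 + permMatrix n (swap i j * swap k l) := by
  ext a b
  simp only [permMatrix_apply_eq_single, Matrix.add_apply, Perm.mul_apply, Perm.one_apply]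
  by_cases h : a = k ∨ a = l
  · rw [swap_apply_of_ne_of_ne (a := i) (b := j) (x := a) (by grind) (by grind),
      swap_apply_of_ne_of_ne (a := i) (b := j) (x := swap k l a) (by grind) (by grind)]
  · rw [swap_apply_of_ne_of_ne (a := k) (b := l) (x := a) (by grind) (by grind)]
    ring

/-- In the symmetric group on three letters, the odd and the even permutation matrices have the
same sum. -/
lemma permMatrix_triangle {i j k : Fin n} (hij : i ≠ j) (hik : i ≠ k) (hjk : j ≠ k) :
    permMatrix n (swap i j) + permMatrix n (swap i k) + permMatrix n (swap j k)
      = permMatrix n 1 + permMatrix n (swap i j * swap j k)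
        + permMatrix n (swap j k * swap i j) := by
  ext a b
  simp only [permMatrix_apply_eq_single, Matrix.add_apply, Perm.mul_apply, Perm.one_apply]
  rcases eq_or_ne a i with rfl | hi
  · simp [swap_apply_of_ne_of_ne, hij, hik]; ring
  rcases eq_or_ne a j with rfl | hj
  · simp [swap_apply_of_ne_of_ne, hij, hij.symm, hik, hik.symm, hjk, hjk.symm]; ring
  rcases eq_or_ne a k with rfl | hk
  · simp [swap_apply_of_ne_of_ne, hik.symm, hjk.symm]
  simp [swap_apply_of_ne_of_ne, hi, hj, hk]

lemma sign_swap_mul_swap {i j k l : Fin n} (hij : i ≠ j) (hkl : k ≠ l) :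
    Perm.sign (swap i j * swap k l) = 1 := by
  simp [Perm.sign_swap hij, Perm.sign_swap hkl]

/-! ### The case `5 ≤ n` -/

instance : LocallyConvexSpace ℝ (Matrix (Fin n) (Fin n) ℝ) :=
  inferInstanceAs (LocallyConvexSpace ℝ (Fin n → Fin n → ℝ))

/-- An alternating sum of the disjoint-transposition relation around the 5-cycle
`01, 23, 40, 12, 34` of successively disjoint pairs in the Petersen graph. -/
lemma two_smul_permMatrix_swap {e : Fin 5 → Fin n} (he : Function.Injective e) :
    (2 : ℝ) • permMatrix n (swap (e 0) (e 1)) = permMatrix n 1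
      + permMatrix n (swap (e 0) (e 1) * swap (e 2) (e 3))
      - permMatrix n (swap (e 2) (e 3) * swap (e 4) (e 0))
      + permMatrix n (swap (e 4) (e 0) * swap (e 1) (e 2))
      - permMatrix n (swap (e 1) (e 2) * swap (e 3) (e 4))
      + permMatrix n (swap (e 3) (e 4) * swap (e 0) (e 1)) := by
  have hd : ∀ i j k l : Fin 5, i ≠ k ∧ i ≠ l ∧ j ≠ k ∧ j ≠ l →
      permMatrix n (swap (e i) (e j)) + permMatrix n (swap (e k) (e l))
      = permMatrix n 1 + permMatrix n (swap (e i) (e j) * swap (e k) (e l)) :=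
    fun i j k l h => permMatrix_swap_add_swap (he.ne h.1) (he.ne h.2.1) (he.ne h.2.2.1)
      (he.ne h.2.2.2)
  have h1 := hd 0 1 2 3 (by decide)
  have h2 := hd 2 3 4 0 (by decide)
  have h3 := hd 4 0 1 2 (by decide)
  have h4 := hd 1 2 3 4 (by decide)
  have h5 := hd 3 4 0 1 (by decide)
  rw [two_smul]
  linear_combination (norm := module) h1 - h2 + h3 - h4 + h5

lemma permMatrix_swap_mem_affineSpan {e : Fin 5 → Fin n} (he : Function.Injective e) :
    permMatrix n (swap (e 0) (e 1)) ∈ affineSpan ℝ (evenMatrices n) := by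
  have hV : ∀ i j k l : Fin 5, i ≠ j ∧ k ≠ l →
      permMatrix n (swap (e i) (e j) * swap (e k) (e l)) ∈ evenMatrices n := fun i j k l h =>
    permMatrix_mem_evenMatrices (sign_swap_mul_swap (he.ne h.1) (he.ne h.2))
  have h1 := vsub_mem_vectorSpan ℝ (hV 0 1 2 3 (by decide)) (hV 2 3 4 0 (by decide))
  have h2 := vsub_mem_vectorSpan ℝ (hV 4 0 1 2 (by decide)) (hV 1 2 3 4 (by decide))
  have h3 := vsub_mem_vectorSpan ℝ (hV 3 4 0 1 (by decide)) one_mem_evenMatrices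
  have h4 := Submodule.smul_mem _ (1 / 2 : ℝ) (add_mem (add_mem h1 h2) h3)
  rw [← direction_affineSpan] at h4
  have h5 := AffineSubspace.vadd_mem_of_mem_direction h4
    (subset_affineSpan ℝ _ (one_mem_evenMatrices (n := n)))
  convert h5 using 1
  have h6 := two_smul_permMatrix_swap he
  simp only [vsub_eq_sub, vadd_eq_add]
  linear_combination (norm := module) (1 / 2 : ℝ) • h6

/-- An affine functional that takes only the values `0` and `1` on even permutation matrices is
nonnegative on transpositions. -/
lemma nonneg_of_zero_one {e : Fin 5 → Fin n} (he : Function.Injective e)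
    (f : Matrix (Fin n) (Fin n) ℝ →ₗ[ℝ] ℝ) (γ : ℝ)
    (h01 : ∀ v ∈ evenMatrices n, f v + γ = 0 ∨ f v + γ = 1) :
    0 ≤ f (permMatrix n (swap (e 0) (e 1))) + γ := by
  have hvals : ∀ g : Perm (Fin n), Perm.sign g = 1 →
      ∃ z : ℤ, f (permMatrix n g) + γ = z ∧ 0 ≤ z ∧ z ≤ 1 := fun g hg => by
    rcases h01 _ (permMatrix_mem_evenMatrices hg) with h | h
    · exact ⟨0, by simp [h], by simp, by simp⟩
    · exact ⟨1, by simp [h], by simp, by simp⟩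
  have hprod : ∀ i j k l : Fin 5, i ≠ j ∧ k ≠ l → ∃ z : ℤ,
      f (permMatrix n (swap (e i) (e j) * swap (e k) (e l))) + γ = z ∧ 0 ≤ z ∧ z ≤ 1 :=
    fun i j k l h => hvals _ (sign_swap_mul_swap (he.ne h.1) (he.ne h.2))
  obtain ⟨a, ha, ha0, ha1⟩ := hvals 1 (by simp)
  have hdisj : ∀ i j k l : Fin 5, i ≠ j ∧ k ≠ l ∧ i ≠ k ∧ i ≠ l ∧ j ≠ k ∧ j ≠ l → ∃ z : ℤ,
      (f (permMatrix n (swap (e i) (e j))) + γ) + (f (permMatrix n (swap (e k) (e l))) + γ) = z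
        ∧ a ≤ z ∧ z ≤ a + 1 := fun i j k l h => by
    obtain ⟨z, hz, h0, h1⟩ := hprod i j k l ⟨h.1, h.2.1⟩
    have := congrArg f (permMatrix_swap_add_swap (he.ne h.2.2.1) (he.ne h.2.2.2.1)
      (he.ne h.2.2.2.2.1) (he.ne h.2.2.2.2.2))
    simp only [map_add] at this
    exact ⟨a + z, by push_cast; linarith, by omega, by omega⟩
  obtain ⟨b, hb, hb'⟩ := hprod 2 3 3 4 (by decide)
  obtain ⟨c, hc, hc'⟩ := hprod 3 4 2 3 (by decide)
  have htri := congrArg f (permMatrix_triangle (he.ne (show (2 : Fin 5) ≠ 3 by decide))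
    (he.ne (show (2 : Fin 5) ≠ 4 by decide)) (he.ne (show (3 : Fin 5) ≠ 4 by decide)))
  simp only [map_add] at htri
  obtain ⟨p, hp, hp'⟩ := hdisj 0 1 2 3 (by decide)
  obtain ⟨q, hq, hq'⟩ := hdisj 0 1 2 4 (by decide)
  obtain ⟨r, hr, hr'⟩ := hdisj 0 1 3 4 (by decide)
  -- Twice the value at the transposition is an integer by the 5-cycle of disjoint pairs, and three
  -- times the value is an integer by the triangle relation.
  obtain ⟨z₂, hz₂, -⟩ := hdisj 2 3 4 0 (by decide)
  obtain ⟨z₃, hz₃, -⟩ := hdisj 4 0 1 2 (by decide)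
  obtain ⟨z₄, hz₄, -⟩ := hdisj 1 2 3 4 (by decide)
  set t := f (permMatrix n (swap (e 0) (e 1))) + γ with ht
  have ht2 : 2 * t = ((p - z₂ + z₃ - z₄ + r : ℤ) : ℝ) := by push_cast; linarith
  have ht3 : 3 * t = ((p + q + r - a - b - c : ℤ) : ℝ) := by push_cast; linarith
  obtain ⟨z, hz⟩ : ∃ z : ℤ, t = z :=
    ⟨(p + q + r - a - b - c) - (p - z₂ + z₃ - z₄ + r), by rw [Int.cast_sub]; linarith⟩
  rw [hz] at ht3 ⊢
  have ht3' : 3 * z = p + q + r - a - b - c := by exact_mod_cast ht3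
  exact_mod_cast (show 0 ≤ z by omega)

lemma not_isTwoLevel_of_five_le (hn : 5 ≤ n) : ¬ IsTwoLevel (convexHull ℝ (evenMatrices n)) := by
  intro h
  have he := Fin.castLE_injective hn
  have hodd : swap (Fin.castLE hn 0) (Fin.castLE hn 1) ∉ alternatingGroup (Fin n) := by
    rw [Perm.mem_alternatingGroup, Perm.sign_swap (he.ne (by decide))]
    decide
  obtain ⟨f, γ, h01, hneg⟩ := h.exists_zero_one finite_evenMatrices
    evenMatrices_subset_extremePoints (permMatrix_swap_mem_affineSpan he)
    (permMatrix_notMem_convexHull hodd)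
  exact absurd (nonneg_of_zero_one he f γ h01) (not_le.2 hneg)

/-! ### The cases `n = 3` and `n = 4` -/

lemma le_polytopeDim {k : ℕ} {g : Fin k → Perm (Fin n)} (hg : ∀ i, Perm.sign (g i) = 1)
    (hli : LinearIndependent ℝ fun i => permMatrix n (g i) - permMatrix n 1) :
    k ≤ polytopeDim (convexHull ℝ (evenMatrices n)) := by
  rw [polytopeDim_convexHull, ← Fintype.card_fin k, ← finrank_span_eq_card hli]
  refine Submodule.finrank_mono (Submodule.span_le.2 ?_)
  rintro _ ⟨i, rfl⟩
  exact vsub_mem_vectorSpan ℝ (permMatrix_mem_evenMatrices (hg i)) one_mem_evenMatrices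

/-- A facet of the alternating polytope misses at most `n! / 2 - d` vertices, `d` being a lower
bound for the dimension. -/
lemma IsFacet.exists_few_nontight (hn : 2 ≤ n) {d : ℕ} {F : Set (Matrix (Fin n) (Fin n) ℝ)}
    (hd : d ≤ polytopeDim (convexHull ℝ (evenMatrices n)))
    (hF : IsFacet (convexHull ℝ (evenMatrices n)) F) :
    ∃ (c : Matrix (Fin n) (Fin n) ℝ →ₗ[ℝ] ℝ) (m : ℝ), (∀ v ∈ evenMatrices n, c v ≤ m) ∧
      (∃ v ∈ evenMatrices n, c v ≠ m) ∧
      F = {y ∈ convexHull ℝ (evenMatrices n) | c y = m} ∧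
      d + {v ∈ evenMatrices n | c v ≠ m}.ncard ≤ n.factorial / 2 := by
  obtain ⟨c, m, h1, h2, h3, h4⟩ :=
    hF.exists_functional finite_evenMatrices ⟨_, one_mem_evenMatrices⟩
  refine ⟨c, m, h1, h2, h3, ?_⟩
  rw [← ncard_evenMatrices hn]
  have h5 := Set.ncard_inter_add_ncard_sdiff_eq_ncard (evenMatrices n) {v | c v = m}
    finite_evenMatrices
  have h6 : evenMatrices n \ {v | c v = m} = {v ∈ evenMatrices n | c v ≠ m} := rfl
  have h7 : evenMatrices n ∩ {v | c v = m} = {v ∈ evenMatrices n | c v = m} := rfl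
  rw [h6, h7] at h5
  omega

/-- The polytope is a triangle: a facet misses exactly one vertex. -/
lemma isTwoLevel_three : IsTwoLevel (convexHull ℝ (evenMatrices 3)) := by
  have hd : 2 ≤ polytopeDim (convexHull ℝ (evenMatrices 3)) := by
    refine le_polytopeDim (g := ![finRotate 3, (finRotate 3)⁻¹]) (by decide) ?_
    rw [Fintype.linearIndependent_iff]
    intro w hw
    have h01 := congrFun (congrFun hw 0) 1
    have h02 := congrFun (congrFun hw 0) 2
    simp +decide [Fin.sum_univ_succ, permMatrix] at h01 h02
    intro i
    fin_cases i
    · exact h01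
    · exact h02
  intro F hF
  obtain ⟨c, m, hle, ⟨u, hu, hum⟩, hFeq, hcard⟩ := hF.exists_few_nontight (by norm_num) hd
  refine ⟨c, m, c u, hFeq, fun v hv => ?_⟩
  by_contra! hne
  have h1 : {v ∈ evenMatrices 3 | c v ≠ m}.ncard ≤ 1 := by
    simp [Nat.factorial] at hcard ⊢; omega
  rw [Set.ncard_le_one (finite_evenMatrices.subset (Set.sep_subset _ _))] at h1
  exact hne.2 (by rw [h1 v ⟨extremePoints_convexHull_subset hv, hne.1⟩ u ⟨hu, hum⟩])

/-- The elements of `A₄`, the first argument indexing the coset of the Klein four-group and the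
second one the element within the coset. -/
def cosetElt (i : Fin 3) (j : Fin 4) : Perm (Fin 4) :=
  (![1, swap 0 1 * swap 1 2, swap 1 2 * swap 0 1] : Fin 3 → Perm (Fin 4)) i *
  (![1, swap 0 1 * swap 2 3, swap 0 2 * swap 1 3, swap 0 3 * swap 1 2] : Fin 4 → Perm (Fin 4)) j

lemma sign_cosetElt : ∀ i j, Perm.sign (cosetElt i j) = 1 := by decide

lemma cosetElt_injective : ∀ i j i' j', cosetElt i j = cosetElt i' j' → i = i' ∧ j = j' := by
  decide

lemma exists_cosetElt : ∀ g : Perm (Fin 4), Perm.sign g = 1 → ∃ i j, cosetElt i j = g := by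
  decide

/-- Each coset of the Klein four-group is a Latin square. -/
lemma sum_permMatrix_cosetElt (i : Fin 3) :
    ∑ j, permMatrix 4 (cosetElt i j) = Matrix.of fun _ _ => 1 := by
  have h : ∀ i p q, (∑ j, if cosetElt i j p = q then 1 else 0) = 1 := by decide
  ext p q
  have := congrArg (Nat.cast : ℕ → ℝ) (h i p q)
  simpa [Matrix.sum_apply, permMatrix] using this

lemma nine_le_polytopeDim : 9 ≤ polytopeDim (convexHull ℝ (evenMatrices 4)) := by
  refine le_polytopeDim (g := ![cosetElt 0 1, cosetElt 0 2, cosetElt 0 3, cosetElt 1 0,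
    cosetElt 1 1, cosetElt 1 2, cosetElt 2 0, cosetElt 2 1, cosetElt 2 2]) (by decide) ?_
  rw [Fintype.linearIndependent_iff]
  intro w hw
  have h := fun p q => congrFun (congrFun hw p) q
  simp only [Fin.forall_fin_succ, Fin.sum_univ_succ] at h
  simp +decide [permMatrix] at h
  obtain ⟨⟨-, h1, h2, h3⟩, ⟨h4, -, h5, h6⟩, ⟨h7, h8, -, h9⟩, h10, h11, h12, -⟩ := h
  intro i
  fin_cases i <;> simp only [Fin.zero_eta, Fin.mk_one, Fin.reduceFinMk] <;> linarith

lemma isTwoLevel_four : IsTwoLevel (convexHull ℝ (evenMatrices 4)) := by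
  intro F hF
  obtain ⟨c, m, hle, ⟨u, hu, hum⟩, hFeq, hcard⟩ :=
    hF.exists_few_nontight (by norm_num) nine_le_polytopeDim
  set N := {v ∈ evenMatrices 4 | c v ≠ m} with hN
  have hcardN : N.ncard ≤ 3 := by simp [Nat.factorial] at hcard; omega
  have hNfin : N.Finite := finite_evenMatrices.subset (Set.sep_subset _ _)
  have hmem : ∀ i j, permMatrix 4 (cosetElt i j) ∈ evenMatrices 4 := fun i j =>
    permMatrix_mem_evenMatrices (sign_cosetElt i j)
  -- The total slack is the same on each coset.
  set t := 4 * m - c (Matrix.of fun _ _ => 1) with ht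
  have hrow : ∀ i, ∑ j, (m - c (permMatrix 4 (cosetElt i j))) = t := fun i => by
    rw [Finset.sum_sub_distrib, ← map_sum, sum_permMatrix_cosetElt]
    simp [ht]
  have hnn : ∀ i j, 0 ≤ m - c (permMatrix 4 (cosetElt i j)) := fun i j =>
    sub_nonneg.2 (hle _ (hmem i j))
  have ht0 : t ≠ 0 := by
    intro h0
    obtain ⟨g, hg, rfl⟩ := hu
    obtain ⟨i, j, rfl⟩ := exists_cosetElt g hg
    have := (Finset.sum_eq_zero_iff_of_nonneg fun j _ => hnn i j).1 ((hrow i).trans h0) j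
      (Finset.mem_univ j)
    exact hum (by linarith)
  have hσ : ∀ i, ∃ j, c (permMatrix 4 (cosetElt i j)) ≠ m := fun i => by
    by_contra! h
    exact ht0 (by rw [← hrow i]; simp [h])
  choose σ hσ using hσ
  -- Three cosets and at most three nontight vertices: exactly one in each coset.
  have hrange : Set.range (fun i => permMatrix 4 (cosetElt i (σ i))) = N := by
    refine Set.eq_of_subset_of_ncard_le ?_ ?_ hNfin
    · rintro _ ⟨i, rfl⟩
      exact ⟨hmem _ _, hσ i⟩
    · have hinj : Function.Injective (fun i => permMatrix 4 (cosetElt i (σ i))) :=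
        fun i i' h => (cosetElt_injective _ _ _ _ (permMatrix_injective h)).1
      rw [← Set.image_univ, Set.ncard_image_of_injective _ hinj, Set.ncard_univ]
      simpa using hcardN
  refine ⟨c, m, m - t, hFeq, fun v hv => ?_⟩
  by_cases hvm : c v = m
  · exact Or.inl hvm
  right
  have hvN : v ∈ N := ⟨extremePoints_convexHull_subset hv, hvm⟩
  rw [← hrange] at hvN
  obtain ⟨i, rfl⟩ := hvN
  have := hrow i
  rw [Finset.sum_eq_single (σ i)] at this
  · simp only; linarith
  · intro j _ hj
    by_contra hne
    have : permMatrix 4 (cosetElt i j) ∈ N := ⟨hmem i j, fun h => hne (by rw [h, sub_self])⟩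
    rw [← hrange] at this
    obtain ⟨i', hi'⟩ := this
    obtain ⟨rfl, h⟩ := cosetElt_injective _ _ _ _ (permMatrix_injective hi')
    exact hj h.symm
  · simp

end Permutations

/-- For `n ≥ 3`, the permutation polytope `P(A_n)` of the alternating group is
two-level if and only if `n ≤ 4`. -/
theorem alternating_twoLevel_iff (n : ℕ) (hn : 3 ≤ n) :
    IsTwoLevel
        (permPolytope n ((alternatingGroup (Fin n) : Subgroup (Equiv.Perm (Fin n))) :
          Set (Equiv.Perm (Fin n))))
      ↔ n ≤ 4 := by
  change IsTwoLevel (convexHull ℝ (evenMatrices n)) ↔ n ≤ 4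
  constructor
  · intro h
    by_contra! hn5
    exact not_isTwoLevel_of_five_le hn5 h
  · intro h4
    obtain rfl | rfl : n = 3 ∨ n = 4 := by omega
    · exact isTwoLevel_three
    · exact isTwoLevel_four
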